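/- arXiv:2401.08385 — 6 statements merged into one kernel-verified Lean document; each statement's English description precedes it below -/
import Mathlib

section
/- (Mutual recursion for procedure contracts, Coq lemma recursive_proc.) Let ψ be a procedure environment and φ a contract environment. If for every procedure environment ψ', ψ' ⊨ φ implies that for every procedure name y the Hoare triple ψ' ⊨ {pre_φ(y)} ψ(y) {post_φ(y)} holds (i.e., the body of y taken from ψ satisfies its contract when executed under ψ'), then ψ ⊨ φ. -/
/-- Memory states: location `x_i` holds value `σ i`. -/
abbrev Mem : Type := ℕ → ℕ

/-- Update `σ[i/n]`: maps `i` to `n` and agrees with `σ` elsewhere. -/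
def Mem.update (σ : Mem) (i n : ℕ) : Mem := fun j => if j = i then n else σ j

inductive Aop : Type
  | add | mul | sub

def Aop.eval : Aop → ℕ → ℕ → ℕ
  | .add => fun m n => m + n
  | .mul => fun m n => m * n
  | .sub => fun m n => m - n

/-- Arithmetic expressions. -/
inductive Aexp : Type
  | const : ℕ → Aexp
  | loc : ℕ → Aexp
  | deref : ℕ → Aexp
  | addr : ℕ → Aexp
  | binop : Aop → Aexp → Aexp → Aexp

def Aexp.eval : Aexp → Mem → ℕ
  | .const n, _ => n
  | .loc i, σ => σ i
  | .deref i, σ => σ (σ i)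
  | .addr i, _ => i
  | .binop o a1 a2, σ => o.eval (a1.eval σ) (a2.eval σ)

inductive Bcmp : Type
  | le | lt | eq

def Bcmp.eval : Bcmp → ℕ → ℕ → Bool
  | .le => fun m n => decide (m ≤ n)
  | .lt => fun m n => decide (m < n)
  | .eq => fun m n => decide (m = n)

/-- Boolean expressions. -/
inductive Bexp : Type
  | tt : Bexp
  | ff : Bexp
  | cmp : Bcmp → Aexp → Aexp → Bexp
  | and : Bexp → Bexp → Bexp
  | or : Bexp → Bexp → Bexp
  | not : Bexp → Bexp

def Bexp.eval : Bexp → Mem → Bool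
  | .tt, _ => true
  | .ff, _ => false
  | .cmp o a1 a2, σ => o.eval (a1.eval σ) (a2.eval σ)
  | .and b1 b2, σ => b1.eval σ && b2.eval σ
  | .or b1 b2, σ => b1.eval σ || b2.eval σ
  | .not b, σ => !(b.eval σ)

/-- Commands, over a type `Y` of procedure names. -/
inductive Com (Y : Type) : Type
  | skip : Com Y
  | assign : ℕ → Aexp → Com Y                      -- x_i := a
  | store : ℕ → Aexp → Com Y                       -- *x_i := a
  | seq : Com Y → Com Y → Com Y
  | assert : (Mem → Prop) → Com Y
  | cond : Bexp → Com Y → Com Y → Com Y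
  | while : Bexp → (Mem → Prop) → Com Y → Com Y
  | call : Y → Com Y

/-- Big-step operational semantics `⟨c, σ⟩ →_ψ σ'`. -/
inductive BigStep {Y : Type} (ψ : Y → Com Y) : Com Y → Mem → Mem → Prop
  | skip (σ : Mem) : BigStep ψ .skip σ σ
  | assign (i : ℕ) (a : Aexp) (σ : Mem) :
      BigStep ψ (.assign i a) σ (σ.update i (a.eval σ))
  | store (i : ℕ) (a : Aexp) (σ : Mem) :
      BigStep ψ (.store i a) σ (σ.update (σ i) (a.eval σ))
  | seq {c1 c2 : Com Y} {σ σ'' σ' : Mem} :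
      BigStep ψ c1 σ σ'' → BigStep ψ c2 σ'' σ' → BigStep ψ (.seq c1 c2) σ σ'
  | assert (P : Mem → Prop) (σ : Mem) : BigStep ψ (.assert P) σ σ
  | condTrue {b : Bexp} {c1 c2 : Com Y} {σ σ' : Mem} :
      b.eval σ = true → BigStep ψ c1 σ σ' → BigStep ψ (.cond b c1 c2) σ σ'
  | condFalse {b : Bexp} {c1 c2 : Com Y} {σ σ' : Mem} :
      b.eval σ = false → BigStep ψ c2 σ σ' → BigStep ψ (.cond b c1 c2) σ σ'
  | whileTrue {b : Bexp} {I : Mem → Prop} {c : Com Y} {σ σ'' σ' : Mem} :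
      b.eval σ = true → BigStep ψ c σ σ'' → BigStep ψ (.while b I c) σ'' σ' →
      BigStep ψ (.while b I c) σ σ'
  | whileFalse {b : Bexp} {I : Mem → Prop} {c : Com Y} {σ : Mem} :
      b.eval σ = false → BigStep ψ (.while b I c) σ σ
  | call {y : Y} {σ σ' : Mem} : BigStep ψ (ψ y) σ σ' → BigStep ψ (.call y) σ σ'

/-- Hoare triple `ψ ⊨ {P} c {Q}`. -/
def HoareTriple {Y : Type} (ψ : Y → Com Y) (P : Mem → Prop) (c : Com Y)
    (Q : Mem → Mem → Prop) : Prop :=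
  ∀ σ σ' : Mem, P σ → BigStep ψ c σ σ' → Q σ σ'

/-- A contract: a precondition and a postcondition. -/
abbrev Contract : Type := (Mem → Prop) × (Mem → Mem → Prop)

/-- Contract validity `ψ ⊨ φ`. -/
def ContractValid {Y : Type} (ψ : Y → Com Y) (φ : Y → Contract) : Prop :=
  ∀ y : Y, HoareTriple ψ (φ y).1 (.call y) (φ y).2

/-- Pointwise big-step execution of a sequence of commands. -/
inductive BigSteps {Y : Type} (ψ : Y → Com Y) : List (Com Y) → List Mem → List Mem → Prop
  | nil : BigSteps ψ [] [] []
  | cons {c : Com Y} {cs : List (Com Y)} {σ σ' : Mem} {σs σs' : List Mem} :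
      BigStep ψ c σ σ' → BigSteps ψ cs σs σs' →
      BigSteps ψ (c :: cs) (σ :: σs) (σ' :: σs')

/-- Relational Hoare triple `ψ ⊨ {P} (c_k) {Q}`. -/
def RHoare {Y : Type} (ψ : Y → Com Y) (P : List Mem → Prop) (cs : List (Com Y))
    (Q : List Mem → List Mem → Prop) : Prop :=
  ∀ σs σs' : List Mem, P σs → BigSteps ψ cs σs σs' → Q σs σs'

/-- A relational contract: a relational precondition and postcondition. -/
abbrev RContract : Type := (List Mem → Prop) × (List Mem → List Mem → Prop)

/-- Relational contract validity `ψ ⊨ Φ`. -/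
def RContractValid {Y : Type} (ψ : Y → Com Y) (Φ : List Y → RContract) : Prop :=
  ∀ ys : List Y, ys ≠ [] → RHoare ψ (Φ ys).1 (ys.map Com.call) (Φ ys).2

/-- Optimized main VC function `Tc`. -/
def Tc {Y : Type} : Com Y → Mem → Mem → (Y → Contract) → (Prop → Prop) → Prop
  | .skip, σ, σ', _, f => f (σ = σ')
  | .assign i a, σ, σ', _, f => f (σ' = σ.update i (a.eval σ))
  | .store i a, σ, σ', _, f => f (σ' = σ.update (σ i) (a.eval σ))
  | .assert P', σ, σ', _, f => f (P' σ ∧ σ = σ')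
  | .seq c0 c1, σ, σ', φ, f =>
      ∀ σ'' : Mem, Tc c0 σ σ'' φ (fun p1 => Tc c1 σ'' σ' φ (fun p2 => f (p1 ∧ p2)))
  | .cond b c0 c1, σ, σ', φ, f =>
      Tc c0 σ σ' φ (fun p1 => Tc c1 σ σ' φ (fun p2 =>
        f ((b.eval σ = true → p1) ∧ (b.eval σ = false → p2))))
  | .call y, σ, σ', φ, f => f ((φ y).1 σ ∧ (φ y).2 σ σ')
  | .while b I _, σ, σ', _, f => f (I σ ∧ I σ' ∧ b.eval σ' = false)

/-- Optimized auxiliary VC function `Ta`. -/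
def Ta {Y : Type} : Com Y → Mem → (Y → Contract) → Prop
  | .skip, _, _ => True
  | .assign _ _, _, _ => True
  | .store _ _, _, _ => True
  | .assert P', σ, _ => P' σ
  | .seq c0 c1, σ, φ =>
      Ta c0 σ φ ∧ ∀ σ' : Mem, Tc c0 σ σ' φ (fun p => p → Ta c1 σ' φ)
  | .cond b c0 c1, σ, φ =>
      (b.eval σ = true → Ta c0 σ φ) ∧ (b.eval σ = false → Ta c1 σ φ)
  | .call y, σ, φ => (φ y).1 σ
  | .while b I c, σ, φ =>
      I σ ∧ (∀ σ' : Mem, I σ' → b.eval σ' = true → Ta c σ' φ) ∧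
      (∀ σ' σ'' : Mem, I σ' → Tc c σ' σ'' φ (fun p => p → I σ''))

/-- Optimized procedure VC `Tf`. -/
def Tf {Y : Type} (φ : Y → Contract) (ψ : Y → Com Y) : Prop :=
  ∀ (y : Y) (σ σ' : Mem), (φ y).1 σ →
    Ta (ψ y) σ φ ∧ Tc (ψ y) σ σ' φ (fun p => p → (φ y).2 σ σ')

/-- Naive main VC function `Tcⁿ`. -/
def Tcn {Y : Type} : Com Y → Mem → (Y → Contract) → (Mem → Prop) → Prop
  | .skip, σ, _, P => P σ
  | .assign i a, σ, _, P => P (σ.update i (a.eval σ))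
  | .store i a, σ, _, P => P (σ.update (σ i) (a.eval σ))
  | .assert P', σ, _, P => P' σ → P σ
  | .seq c0 c1, σ, φ, P => Tcn c0 σ φ (fun σ'' => Tcn c1 σ'' φ P)
  | .cond b c0 c1, σ, φ, P =>
      (b.eval σ = true → Tcn c0 σ φ P) ∧ (b.eval σ = false → Tcn c1 σ φ P)
  | .call y, σ, φ, P => ∀ σ' : Mem, (φ y).1 σ ∧ (φ y).2 σ σ' → P σ'
  | .while b I _, σ, _, P => ∀ σ' : Mem, I σ ∧ I σ' ∧ b.eval σ' = false → P σ'

/-- Naive auxiliary VC function `Taⁿ`. -/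
def Tan {Y : Type} : Com Y → Mem → (Y → Contract) → Prop
  | .skip, _, _ => True
  | .assign _ _, _, _ => True
  | .store _ _, _, _ => True
  | .assert P', σ, _ => P' σ
  | .seq c0 c1, σ, φ => Tan c0 σ φ ∧ Tcn c0 σ φ (fun σ' => Tan c1 σ' φ)
  | .cond b c0 c1, σ, φ =>
      (b.eval σ = true → Tan c0 σ φ) ∧ (b.eval σ = false → Tan c1 σ φ)
  | .call y, σ, φ => (φ y).1 σ
  | .while b I c, σ, φ =>
      I σ ∧ (∀ σ' : Mem, I σ' → b.eval σ' = true → Tan c σ' φ ∧ Tcn c σ' φ I)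

/-- Naive procedure VC `Tfⁿ`. -/
def Tfn {Y : Type} (φ : Y → Contract) (ψ : Y → Com Y) : Prop :=
  ∀ (y : Y) (σ : Mem), (φ y).1 σ →
    Tan (ψ y) σ φ ∧ Tcn (ψ y) σ φ (fun σ' => (φ y).2 σ σ')

/-- Relational VC function `Tr` (recursion over the sequence of commands). -/
def Tr {Y : Type} : List (Com Y) → List Mem → List Mem → (Y → Contract) →
    (Prop → Prop) → Prop
  | [], [], [], _, f => f True
  | c :: cs, σ :: σs, σ' :: σs', φ, f =>
      Tc c σ σ' φ (fun pn => Tr cs σs σs' φ (fun pm => f (pn ∧ pm)))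
  | _, _, _, _, _ => True

/-- Relational auxiliary VC function `Ta_r`. -/
def Tar {Y : Type} : List (Com Y) → List Mem → (Y → Contract) → Prop
  | [], [], _ => True
  | c :: cs, σ :: σs, φ => Ta c σ φ ∧ Tar cs σs φ
  | _, _, _ => True

/-- `Proccall(y, σ, σ', ψ)`. -/
def Proccall {Y : Type} (y : Y) (σ σ' : Mem) (ψ : Y → Com Y) : Prop :=
  BigStep ψ (.call y) σ σ'

/-- `Procpred`: all the calls of the sequence have taken place. -/
def Procpred {Y : Type} (ψ : Y → Com Y) : List Y → List Mem → List Mem → Prop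
  | [], [], [] => True
  | y :: ys, σ :: σs, σ' :: σs' => Proccall y σ σ' ψ ∧ Procpred ψ ys σs σs'
  | _, _, _ => False

/-- `Tpr`: translation of the relational contracts into a logical formula. -/
def Tpr {Y : Type} (Φ : List Y → RContract) (ψ : Y → Com Y) : Prop :=
  ∀ (ys : List Y) (σs σs' : List Mem), ys ≠ [] →
    Procpred ψ ys σs σs' → (Φ ys).1 σs → (Φ ys).2 σs σs'

/-- `Φcall`: reduce singleton relational contracts to standard contracts with
tracked calls. -/
def Phicall {Y : Type} (Φ : List Y → RContract) (ψ : Y → Com Y) : Y → Contract :=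
  fun y =>
    (fun σ => (Φ [y]).1 [σ],
     fun σ σ' => (Φ [y]).2 [σ] [σ'] ∧ Proccall y σ σ' ψ)

/-- Relational procedure VC `Tf_r`. -/
def Tfr {Y : Type} (Φ : List Y → RContract) (ψ : Y → Com Y) : Prop :=
  ∀ (ys : List Y) (σs σs' : List Mem) (ψ' : Y → Com Y),
    (Φ ys).1 σs → Tpr Φ ψ' →
    Tar (ys.map ψ) σs (Phicall Φ ψ') ∧
    Tr (ys.map ψ) σs σs' (Phicall Φ ψ')
      (fun p => p → (Φ ys).2 σs σs')

/-- The recursive summation command `c_sum`. -/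
def csum : Com Unit :=
  .cond (.cmp .lt (.loc 1) (.loc 2))
    (.seq (.assign 3 (.binop .add (.loc 3) (.loc 1)))
      (.seq (.assign 1 (.binop .add (.loc 1) (.const 1)))
        (.call ())))
    .skip

/-- The procedure environment binding `y_sum` to `c_sum`. -/
def psum : Unit → Com Unit := fun _ => csum

/-! A terminating execution makes only finitely many nested calls, so it survives when `ψ` is
replaced by `unfolding ψ k` for large `k`, in which calls nested deeper than `k` diverge. It
therefore suffices that every `unfolding ψ k` meets the contracts. For `k = 0` calls never
terminate. Executing a call under `unfolding ψ (k + 1)` is executing its original body under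
`unfolding ψ k`, so the hypothesis applied to `ψ' = unfolding ψ k` is exactly the induction
step. -/

/-- Simultaneous substitution of the command `g y` for every call to `y`. -/
def Com.subst {Y : Type} (g : Y → Com Y) : Com Y → Com Y
  | .skip => .skip
  | .assign i a => .assign i a
  | .store i a => .store i a
  | .seq c₁ c₂ => .seq (c₁.subst g) (c₂.subst g)
  | .assert P => .assert P
  | .cond b c₁ c₂ => .cond b (c₁.subst g) (c₂.subst g)
  | .while b I c => .while b I (c.subst g)
  | .call y => g y

/-- The `k`-th approximation of the procedure environment `ψ`: a call follows `ψ` through at most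
`k` nested calls, itself included, and the deeper ones are replaced by a diverging loop. The bodies
are call-free, so their execution does not depend on the environment. -/
def unfolding {Y : Type} (ψ : Y → Com Y) : ℕ → Y → Com Y
  | 0 => fun _ => .while .tt (fun _ => True) .skip
  | k + 1 => fun y => (ψ y).subst (unfolding ψ k)

theorem Com.subst_call {Y : Type} (c : Com Y) : c.subst .call = c := by
  induction c <;> simp_all only [Com.subst]

namespace BigStep

variable {Y : Type} {ψ ψ₁ ψ₂ : Y → Com Y} {b : Bexp} {I I₁ I₂ : Mem → Prop} {c c₁ c₂ : Com Y}
  {σ σ' : Mem} {k m : ℕ}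

theorem call_eq (ψ : Y → Com Y) (y : Y) : BigStep ψ (.call y) = BigStep ψ (ψ y) := by
  ext σ σ'
  exact ⟨fun (.call h) => h, .call⟩

theorem while_induction {motive : Mem → Mem → Prop} (h : BigStep ψ (.while b I c) σ σ')
    (step : ∀ σ σ'' σ', b.eval σ = true → BigStep ψ c σ σ'' → motive σ'' σ' → motive σ σ')
    (base : ∀ σ, b.eval σ = false → motive σ σ) : motive σ σ' := by
  generalize hw : Com.while b I c = w at h
  induction h with
  | whileTrue hb hc _ _ ih => cases hw; exact step _ _ _ hb hc (ih rfl)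
  | whileFalse hb => cases hw; exact base _ hb
  | _ => cases hw

theorem not_while_tt : ¬ BigStep ψ (.while .tt I c) σ σ' := fun h =>
  h.while_induction (motive := fun _ _ => False) (fun _ _ _ _ _ ih => ih)
    (fun _ hb => Bool.noConfusion hb)

theorem while_mono (hc : BigStep ψ₁ c₁ ≤ BigStep ψ₂ c₂) :
    BigStep ψ₁ (.while b I₁ c₁) ≤ BigStep ψ₂ (.while b I₂ c₂) := fun _ _ h =>
  h.while_induction (fun _ _ _ hb h₁ ih => .whileTrue hb (hc _ _ h₁) ih) (fun _ => .whileFalse)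

theorem subst_mono {g₁ g₂ : Y → Com Y} (hg : ∀ y, BigStep ψ₁ (g₁ y) ≤ BigStep ψ₂ (g₂ y))
    (c : Com Y) : BigStep ψ₁ (c.subst g₁) ≤ BigStep ψ₂ (c.subst g₂) := by
  induction c with
  | skip => rintro _ _ ⟨⟩; exact .skip _
  | assign => rintro _ _ ⟨⟩; exact .assign _ _ _
  | store => rintro _ _ ⟨⟩; exact .store _ _ _
  | assert => rintro _ _ ⟨⟩; exact .assert _ _
  | seq _ _ ih₁ ih₂ => exact fun _ _ (.seq h₁ h₂) => .seq (ih₁ _ _ h₁) (ih₂ _ _ h₂)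
  | cond _ _ _ ih₁ ih₂ =>
    intro _ _ h
    cases h with
    | condTrue hb h => exact .condTrue hb (ih₁ _ _ h)
    | condFalse hb h => exact .condFalse hb (ih₂ _ _ h)
  | call y => exact hg y
  | _ _ _ _ ih => exact while_mono ih

theorem env_mono (hψ : ∀ y, BigStep ψ₁ (ψ₁ y) ≤ BigStep ψ₂ (ψ₂ y)) (c : Com Y) :
    BigStep ψ₁ c ≤ BigStep ψ₂ c := by
  simpa only [Com.subst_call] using
    subst_mono (g₁ := .call) (g₂ := .call) (by simpa only [call_eq] using hψ) c

theorem subst_eq {g : Y → Com Y} (hg : ∀ y, BigStep ψ (g y) = BigStep g (g y)) (c : Com Y) :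
    BigStep ψ (c.subst g) = BigStep g c := by
  have hcall (y : Y) : BigStep ψ (g y) = BigStep g (.call y) := (hg y).trans (call_eq g y).symm
  conv_rhs => rw [← c.subst_call]
  exact le_antisymm (subst_mono (fun y => (hcall y).le) c) (subst_mono (fun y => (hcall y).ge) c)

theorem unfolding_body_mono (ψ : Y → Com Y) (hkm : k ≤ m) (y : Y) :
    BigStep ψ₁ (unfolding ψ k y) ≤ BigStep ψ₂ (unfolding ψ m y) := by
  induction k generalizing m y with
  | zero => exact fun _ _ h => absurd h not_while_tt
  | succ k ih =>
    obtain ⟨m, rfl⟩ := Nat.exists_eq_add_one_of_ne_zero (Nat.ne_zero_of_lt hkm)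
    exact subst_mono (ih (Nat.le_of_succ_le_succ hkm)) (ψ y)

theorem unfolding_mono (ψ : Y → Com Y) (c : Com Y) : Monotone fun k => BigStep (unfolding ψ k) c :=
  fun _ _ hkm => env_mono (unfolding_body_mono ψ hkm) c

theorem call_unfolding_succ (ψ : Y → Com Y) (k : ℕ) (y : Y) :
    BigStep (unfolding ψ (k + 1)) (.call y) = BigStep (unfolding ψ k) (ψ y) := by
  rw [call_eq]
  exact subst_eq (fun z => le_antisymm (unfolding_body_mono ψ le_rfl z)
    (unfolding_body_mono ψ le_rfl z)) (ψ y)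

theorem exists_unfolding (h : BigStep ψ c σ σ') : ∃ k, BigStep (unfolding ψ k) c σ σ' := by
  induction h with
  | skip => exact ⟨0, .skip _⟩
  | assign => exact ⟨0, .assign _ _ _⟩
  | store => exact ⟨0, .store _ _ _⟩
  | assert => exact ⟨0, .assert _ _⟩
  | seq _ _ ih₁ ih₂ =>
    obtain ⟨⟨k, h₁⟩, ⟨m, h₂⟩⟩ := And.intro ih₁ ih₂
    exact ⟨max k m, .seq (unfolding_mono ψ _ (le_max_left k m) _ _ h₁)
      (unfolding_mono ψ _ (le_max_right k m) _ _ h₂)⟩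
  | condTrue hb _ ih => exact ih.imp fun _ => .condTrue hb
  | condFalse hb _ ih => exact ih.imp fun _ => .condFalse hb
  | whileTrue hb _ _ ih₁ ih₂ =>
    obtain ⟨⟨k, h₁⟩, ⟨m, h₂⟩⟩ := And.intro ih₁ ih₂
    exact ⟨max k m, .whileTrue hb (unfolding_mono ψ _ (le_max_left k m) _ _ h₁)
      (unfolding_mono ψ _ (le_max_right k m) _ _ h₂)⟩
  | whileFalse hb => exact ⟨0, .whileFalse hb⟩
  | call _ ih =>
    obtain ⟨k, h⟩ := ih
    exact ⟨k + 1, by rwa [call_unfolding_succ]⟩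

end BigStep

theorem HoareTriple.of_unfolding {Y : Type} {ψ : Y → Com Y} {P : Mem → Prop} {c : Com Y}
    {Q : Mem → Mem → Prop} (h : ∀ k, HoareTriple (unfolding ψ k) P c Q) : HoareTriple ψ P c Q := by
  intro σ σ' hP hc
  obtain ⟨k, hk⟩ := hc.exists_unfolding
  exact h k σ σ' hP hk

theorem ContractValid.unfolding_zero {Y : Type} (ψ : Y → Com Y) (φ : Y → Contract) :
    ContractValid (unfolding ψ 0) φ :=
  fun _ _ _ _ (.call h) => absurd h BigStep.not_while_tt

theorem ContractValid.unfolding_succ_iff {Y : Type} {ψ : Y → Com Y} {φ : Y → Contract} {k : ℕ} :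
    ContractValid (unfolding ψ (k + 1)) φ ↔
      ∀ y, HoareTriple (unfolding ψ k) (φ y).1 (ψ y) (φ y).2 := by
  simp only [ContractValid, HoareTriple, BigStep.call_unfolding_succ]

/-- Mutual recursion for procedure contracts (`recursive_proc`). -/
theorem recursive_proc {Y : Type} (ψ : Y → Com Y) (φ : Y → Contract)
    (h : ∀ ψ' : Y → Com Y, ContractValid ψ' φ →
      ∀ y : Y, HoareTriple ψ' (φ y).1 (ψ y) (φ y).2) :
    ContractValid ψ φ := by
  have valid_unfolding (k : ℕ) : ContractValid (unfolding ψ k) φ := by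
    induction k with
    | zero => exact .unfolding_zero ψ φ
    | succ k ih => exact ContractValid.unfolding_succ_iff.mpr (h _ ih)
  exact fun y => .of_unfolding fun k => valid_unfolding k y
end

section
/- (Lemma 1: optimized main VC implies naive main VC.) For every command c, contract environment φ, memory state σ and predicate P on memory states, if for all memory states σ' we have Tc⟦c⟧(σ, σ', φ, λp. p ⇒ P(σ')), then Tcⁿ⟦c⟧(σ, φ, P). -/
/-!
`Tc` is a universal quantifier in continuation-passing style: `Tc c σ σ' φ f` asks for `f p` for
every `p` in a set of formulas that depends only on `c`, `φ`, `σ` and `σ'`. Call `σ'` reachable from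
`σ` if one of these formulas is true. For the continuation `p ↦ (p → P σ')`, the optimized condition
thus says that `P` holds in every reachable state, and the naive condition is the weakest
liberal precondition of `P` with respect to the same reachability relation.
-/

/-- The formulas that `Tc c σ σ' φ` passes to its continuation, indexed by the choices of
intermediate states; those of a conditional combine one formula from each branch. A formula is
recorded as the proposition it denotes at the given states, so equivalent formulas are
identified. -/
def Com.pathFormulas {Y : Type} (φ : Y → Contract) : Com Y → Mem → Mem → Set Prop
  | .skip, σ, σ' => {σ = σ'}
  | .assign i a, σ, σ' => {σ' = σ.update i (a.eval σ)}
  | .store i a, σ, σ' => {σ' = σ.update (σ i) (a.eval σ)}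
  | .assert P, σ, σ' => {P σ ∧ σ = σ'}
  | .seq c0 c1, σ, σ' =>
      ⋃ σ'', Set.image2 And (c0.pathFormulas φ σ σ'') (c1.pathFormulas φ σ'' σ')
  | .cond b c0 c1, σ, σ' =>
      Set.image2 (fun p q => (b.eval σ = true → p) ∧ (b.eval σ = false → q))
        (c0.pathFormulas φ σ σ') (c1.pathFormulas φ σ σ')
  | .call y, σ, σ' => {(φ y).1 σ ∧ (φ y).2 σ σ'}
  | .while b I _, σ, σ' => {I σ ∧ I σ' ∧ b.eval σ' = false}

/-- The transition relation of `c` as the verification conditions see it: loops are abstracted by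
their invariants and calls by their contracts. -/
def Com.Reaches {Y : Type} (φ : Y → Contract) (c : Com Y) (σ σ' : Mem) : Prop :=
  ∃ p ∈ c.pathFormulas φ σ σ', p

section

variable {Y : Type} (φ : Y → Contract)

theorem tc_iff_forall_mem_pathFormulas (c : Com Y) (σ σ' : Mem) (f : Prop → Prop) :
    Tc c σ σ' φ f ↔ ∀ p ∈ c.pathFormulas φ σ σ', f p := by
  induction c generalizing σ σ' f with
  | seq c0 c1 ih0 ih1 =>
    simp only [Tc, Com.pathFormulas, ih0, ih1, Set.mem_iUnion, forall_exists_index]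
    rw [forall_comm (α := Prop)]
    simp only [Set.forall_mem_image2]
  | cond b c0 c1 ih0 ih1 =>
    simp only [Tc, Com.pathFormulas, ih0, ih1, Set.forall_mem_image2]
  | _ => simp only [Tc, Com.pathFormulas, Set.mem_singleton_iff, forall_eq]

theorem Com.pathFormulas_nonempty (c : Com Y) (σ σ' : Mem) :
    (c.pathFormulas φ σ σ').Nonempty := by
  induction c generalizing σ σ' with
  | seq c0 c1 ih0 ih1 =>
    exact Set.nonempty_iUnion.mpr ⟨σ, (ih0 σ σ).image2 (ih1 σ σ')⟩
  | cond b c0 c1 ih0 ih1 => exact (ih0 σ σ').image2 (ih1 σ σ')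
  | _ => exact Set.singleton_nonempty _

theorem Com.reaches_seq_iff (c0 c1 : Com Y) (σ σ' : Mem) :
    (Com.seq c0 c1).Reaches φ σ σ' ↔ ∃ σ'', c0.Reaches φ σ σ'' ∧ c1.Reaches φ σ'' σ' := by
  simp only [Reaches, pathFormulas, Set.mem_iUnion, Set.mem_image2]
  constructor
  · rintro ⟨_, ⟨σ'', p, hp, q, hq, rfl⟩, p_holds, q_holds⟩
    exact ⟨σ'', ⟨p, hp, p_holds⟩, q, hq, q_holds⟩
  · rintro ⟨σ'', ⟨p, hp, p_holds⟩, q, hq, q_holds⟩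
    exact ⟨p ∧ q, ⟨σ'', p, hp, q, hq, rfl⟩, p_holds, q_holds⟩

theorem Com.reaches_cond_iff (b : Bexp) (c0 c1 : Com Y) (σ σ' : Mem) :
    (Com.cond b c0 c1).Reaches φ σ σ' ↔
      (b.eval σ = true → c0.Reaches φ σ σ') ∧ (b.eval σ = false → c1.Reaches φ σ σ') := by
  -- The branch not taken still has to supply a formula, of arbitrary truth value.
  obtain ⟨p₀, hp₀⟩ := c0.pathFormulas_nonempty φ σ σ'
  obtain ⟨q₀, hq₀⟩ := c1.pathFormulas_nonempty φ σ σ'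
  simp only [Reaches, pathFormulas, Set.exists_mem_image2]
  cases b.eval σ <;> simp only [reduceCtorEq, false_imp_iff, true_imp_iff, true_and, and_true]
  · exact ⟨fun ⟨_, _, q, hq, q_holds⟩ => ⟨q, hq, q_holds⟩,
      fun ⟨q, hq, q_holds⟩ => ⟨p₀, hp₀, q, hq, q_holds⟩⟩
  · exact ⟨fun ⟨p, hp, _, _, p_holds⟩ => ⟨p, hp, p_holds⟩,
      fun ⟨p, hp, p_holds⟩ => ⟨p, hp, q₀, hq₀, p_holds⟩⟩

theorem tcn_iff_forall_reaches (c : Com Y) (σ : Mem) (P : Mem → Prop) :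
    Tcn c σ φ P ↔ ∀ σ', c.Reaches φ σ σ' → P σ' := by
  induction c generalizing σ P with
  | seq c0 c1 ih0 ih1 =>
    simp only [Tcn, ih0, ih1, Com.reaches_seq_iff, forall_exists_index, and_imp]
    exact ⟨fun h σ' σ'' h0 h1 => h σ'' h0 σ' h1, fun h σ'' h0 σ' h1 => h σ' σ'' h0 h1⟩
  | cond b c0 c1 ih0 ih1 =>
    simp only [Tcn, ih0, ih1, Com.reaches_cond_iff]
    cases b.eval σ <;> simp
  | _ =>
    simp only [Tcn, Com.Reaches, Com.pathFormulas, Set.mem_singleton_iff, exists_eq_left,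
      forall_eq, forall_eq', and_imp, forall_apply_eq_imp_iff]

end

/-- Lemma 1: the optimized main VC implies the naive main VC. -/
theorem tc_opt_implies_naive {Y : Type} (c : Com Y) (φ : Y → Contract)
    (σ : Mem) (P : Mem → Prop)
    (h : ∀ σ' : Mem, Tc c σ σ' φ (fun p => p → P σ')) :
    Tcn c σ φ P :=
  (tcn_iff_forall_reaches φ c σ P).mpr fun σ' ⟨p, hp, p_holds⟩ =>
    (tc_iff_forall_mem_pathFormulas φ c σ σ' _).mp (h σ') p hp p_holds
end

section
/- (Lemma 2: optimized auxiliary VC implies naive auxiliary VC.) For every command c, contract environment φ and memory state σ, if Ta⟦c⟧(σ, φ) holds, then Taⁿ⟦c⟧(σ, φ) holds. -/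
/-!
Unfolding `Tc c σ σ' φ f` gives a nonempty conjunction of instances of `f`, one for each choice of
intermediate states. Hence it commutes with `∀` (and so with implication by a fixed proposition) and
leaves a constant `f` unchanged. Taking `f` to be `p ↦ (p → P σ')`, these two facts turn the
recursion equations of `Tc`, quantified over `σ'`, into those of `Tcn`.
-/

section

variable {Y : Type} {φ : Y → Contract}

theorem Tc_const {c : Com Y} {σ σ' : Mem} {Q : Prop} : Tc c σ σ' φ (fun _ => Q) ↔ Q := by
  induction c generalizing σ σ' with
  | seq c₀ c₁ ih₀ ih₁ | cond b c₀ c₁ ih₀ ih₁ => simp only [Tc, ih₀, ih₁, forall_const]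
  | _ => exact Iff.rfl

theorem Tc_forall {ι : Sort*} {c : Com Y} {σ σ' : Mem} {F : ι → Prop → Prop} :
    Tc c σ σ' φ (fun p => ∀ i, F i p) ↔ ∀ i, Tc c σ σ' φ (F i) := by
  induction c generalizing σ σ' F with
  | seq c₀ c₁ ih₀ ih₁ =>
    simp only [Tc, ih₀, ih₁]
    exact forall_comm
  | cond b c₀ c₁ ih₀ ih₁ => simp only [Tc, ih₀, ih₁]
  | _ => exact Iff.rfl

theorem Tc_seq_imp {c₀ c₁ : Com Y} {σ σ' : Mem} {Q : Prop} :
    Tc (.seq c₀ c₁) σ σ' φ (fun p => p → Q) ↔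
      ∀ σ'', Tc c₀ σ σ'' φ (fun p₀ => p₀ → Tc c₁ σ'' σ' φ (fun p₁ => p₁ → Q)) := by
  simp only [Tc, and_imp, Tc_forall]

theorem Tc_cond_imp {b : Bexp} {c₀ c₁ : Com Y} {σ σ' : Mem} {Q : Prop} :
    Tc (.cond b c₀ c₁) σ σ' φ (fun p => p → Q) ↔
      (b.eval σ = true → Tc c₀ σ σ' φ (fun p => p → Q)) ∧
        (b.eval σ = false → Tc c₁ σ σ' φ (fun p => p → Q)) := by
  cases hb : b.eval σ <;> simp [Tc, hb, Tc_const]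

theorem Tcn_iff_forall_Tc {c : Com Y} {σ : Mem} {P : Mem → Prop} :
    Tcn c σ φ P ↔ ∀ σ', Tc c σ σ' φ (fun p => p → P σ') := by
  induction c generalizing σ P with
  | skip | assign | store => simp only [Tcn, Tc, forall_eq, forall_eq']
  | assert R => simp only [Tcn, Tc, and_imp, forall_eq', forall_comm (β := R σ)]
  | seq c₀ c₁ ih₀ ih₁ =>
    calc Tcn (.seq c₀ c₁) σ φ P
      _ ↔ ∀ σ'', Tc c₀ σ σ'' φ (fun p => p → ∀ σ', Tc c₁ σ'' σ' φ (fun q => q → P σ')) := by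
        simp only [Tcn, ih₀, ih₁]
      _ ↔ ∀ σ'' σ', Tc c₀ σ σ'' φ (fun p => p → Tc c₁ σ'' σ' φ (fun q => q → P σ')) := by
        simp only [imp_forall_iff (α := Mem), Tc_forall]
      _ ↔ ∀ σ', Tc (.seq c₀ c₁) σ σ' φ (fun p => p → P σ') := by
        simp only [Tc_seq_imp]
        exact forall_comm
  | cond b c₀ c₁ ih₀ ih₁ =>
    simp only [Tcn, ih₀, ih₁, Tc_cond_imp, forall_and, forall_comm (α := Mem)]
  | _ => exact Iff.rfl

theorem Tcn.mono {c : Com Y} {σ : Mem} {P Q : Mem → Prop}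
    (h : Tcn c σ φ P) (hPQ : ∀ σ', P σ' → Q σ') : Tcn c σ φ Q := by
  induction c generalizing σ P Q with
  | skip | assign | store => exact hPQ _ h
  | assert R => exact fun hR => hPQ _ (h hR)
  | seq c₀ c₁ ih₀ ih₁ => exact ih₀ h fun σ'' h' => ih₁ h' hPQ
  | cond b c₀ c₁ ih₀ ih₁ => exact ⟨fun hb => ih₀ (h.1 hb) hPQ, fun hb => ih₁ (h.2 hb) hPQ⟩
  | _ => exact fun σ' h' => hPQ σ' (h σ' h')

end

/-- Lemma 2: the optimized auxiliary VC implies the naive auxiliary VC. -/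
theorem ta_opt_implies_naive {Y : Type} (c : Com Y) (φ : Y → Contract)
    (σ : Mem) (h : Ta c σ φ) : Tan c σ φ := by
  induction c generalizing σ with
  | skip | assign | store | assert | call => exact h
  | seq c₀ c₁ ih₀ ih₁ =>
    obtain ⟨h₀, h₁⟩ := h
    have h₁' : Tcn c₀ σ φ (fun σ' => Ta c₁ σ' φ) := Tcn_iff_forall_Tc.2 h₁
    exact ⟨ih₀ σ h₀, h₁'.mono ih₁⟩
  | cond b c₀ c₁ ih₀ ih₁ => exact ⟨fun hb => ih₀ σ (h.1 hb), fun hb => ih₁ σ (h.2 hb)⟩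
  | _ b I c ih =>
    obtain ⟨hI, hbody, hpres⟩ := h
    exact ⟨hI, fun σ' hσ' hb => ⟨ih σ' (hbody σ' hσ' hb),
      Tcn_iff_forall_Tc.2 fun σ'' => hpres σ' σ'' hσ'⟩⟩
end

section
/- (Theorem 3: Soundness of the optimized VCGen.) Let ψ be a procedure environment, φ a contract environment, c a command, P a precondition and Q a postcondition. Assume: (i) Tf(φ, ψ); (ii) for all memory states σ, P(σ) implies Ta⟦c⟧(σ, φ); and (iii) for all memory states σ, σ', P(σ) implies Tc⟦c⟧(σ, σ', φ, λp. p ⇒ Q(σ, σ')). Then the Hoare triple ψ ⊨ {P} c {Q} holds. -/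
/-! Reading calls through their contracts and loops through their invariants turns each command into
a relation between initial and final states, and `Tc` with the continuation `p ↦ (p → q)` says that
`q` follows from this relation. An execution from a state satisfying the auxiliary VC belongs to the
relation, by induction on the execution rather than on the command: at a call the induction
hypothesis then covers the body, even for recursive procedures. -/

/-- The modular semantics of commands: the big-step semantics with a call replaced by the contract
of its procedure and a loop by its invariant. A precondition, invariant or assertion is part of the
transition and not an assumption on it, as in `Tc`. -/
def ModularStep {Y : Type} (φ : Y → Contract) : Com Y → Mem → Mem → Prop
  | .skip, σ, σ' => σ = σ'
  | .assign i a, σ, σ' => σ' = σ.update i (a.eval σ)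
  | .store i a, σ, σ' => σ' = σ.update (σ i) (a.eval σ)
  | .assert P, σ, σ' => P σ ∧ σ = σ'
  | .seq c₀ c₁, σ, σ' => ∃ σ'', ModularStep φ c₀ σ σ'' ∧ ModularStep φ c₁ σ'' σ'
  | .cond b c₀ c₁, σ, σ' =>
      (b.eval σ = true → ModularStep φ c₀ σ σ') ∧ (b.eval σ = false → ModularStep φ c₁ σ σ')
  | .call y, σ, σ' => (φ y).1 σ ∧ (φ y).2 σ σ'
  | .while b I _, σ, σ' => I σ ∧ I σ' ∧ b.eval σ' = false

section

variable {Y : Type} {φ : Y → Contract} {c : Com Y} {σ σ' : Mem} {q : Prop}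

theorem tc_const_iff : Tc c σ σ' φ (fun _ => q) ↔ q := by
  induction c generalizing σ σ' with
  | seq c₀ c₁ ih₀ ih₁ => simp only [Tc, ih₀, ih₁, forall_const]
  | cond b c₀ c₁ ih₀ ih₁ => simp only [Tc, ih₀, ih₁]
  | _ => rfl

theorem tc_imp_iff : Tc c σ σ' φ (fun p => p → q) ↔ (ModularStep φ c σ σ' → q) := by
  induction c generalizing σ σ' q with
  | seq c₀ c₁ ih₀ ih₁ =>
    calc Tc (.seq c₀ c₁) σ σ' φ (fun p => p → q)
      _ ↔ ∀ σ'', Tc c₀ σ σ'' φ fun p₀ => Tc c₁ σ'' σ' φ fun p₁ => p₁ → p₀ → q := by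
        simp only [Tc, and_imp, imp.swap]
      _ ↔ ∀ σ'', Tc c₀ σ σ'' φ fun p₀ => p₀ → ModularStep φ c₁ σ'' σ' → q := by
        simp_rw [ih₁, imp.swap]
      _ ↔ (ModularStep φ (.seq c₀ c₁) σ σ' → q) := by
        simp only [ih₀, ModularStep, exists_imp, and_imp]
  | cond b c₀ c₁ ih₀ ih₁ =>
    -- After the case split, the continuation of the branch not taken ignores its argument.
    cases hb : b.eval σ <;> simp [Tc, ModularStep, hb, ih₀, ih₁, tc_const_iff]
  | _ => rfl

theorem BigStep.modularStep {ψ : Y → Com Y} (h : BigStep ψ c σ σ') (hf : Tf φ ψ)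
    (ha : Ta c σ φ) : ModularStep φ c σ σ' := by
  induction h with
  | skip | assign | store => rfl
  | assert => exact ⟨ha, rfl⟩
  | seq _ _ ih₀ ih₁ =>
    obtain ⟨ha₀, ha₁⟩ := ha
    have step₀ := ih₀ ha₀
    exact ⟨_, step₀, ih₁ (tc_imp_iff.1 (ha₁ _) step₀)⟩
  | condTrue hb _ ih => simpa [ModularStep, hb] using ih (ha.1 hb)
  | condFalse hb _ ih => simpa [ModularStep, hb] using ih (ha.2 hb)
  | whileTrue hb _ _ ihBody ihLoop =>
    obtain ⟨hI, hBody, hPreserve⟩ := ha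
    have hI' := tc_imp_iff.1 (hPreserve _ _ hI) (ihBody (hBody _ hI hb))
    exact ⟨hI, (ihLoop ⟨hI', hBody, hPreserve⟩).2⟩
  | whileFalse hb => exact ⟨ha.1, ha.1, hb⟩
  | @call y σ σ' _ ih =>
    obtain ⟨haBody, hPost⟩ := hf y σ σ' ha
    exact ⟨ha, tc_imp_iff.1 hPost (ih haBody)⟩

end

/-- Theorem 3: soundness of the optimized VCGen. -/
theorem vcgen_sound {Y : Type} (ψ : Y → Com Y) (φ : Y → Contract)
    (c : Com Y) (P : Mem → Prop) (Q : Mem → Mem → Prop)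
    (h1 : Tf φ ψ)
    (h2 : ∀ σ : Mem, P σ → Ta c σ φ)
    (h3 : ∀ σ σ' : Mem, P σ → Tc c σ σ' φ (fun p => p → Q σ σ')) :
    HoareTriple ψ P c Q := by
  intro σ σ' hP hExec
  have hStep : ModularStep φ c σ σ' := hExec.modularStep h1 (h2 σ hP)
  exact tc_imp_iff.1 (h3 σ σ' hP) hStep
end

section
/- (Theorem 4: Soundness of the relational VCGen.) Let ψ be a procedure environment, Φ a relational contract environment, (c_k)_{k=1}^n a sequence of commands, P a relational precondition for n commands and Q a relational postcondition for n commands. Assume: (1) Tf_r(Φ, ψ); (2) for all sequences of memory states (σ_k)_{k=1}^n and all procedure environments ψ', if P((σ_k)) and Tpr(Φ, ψ) then Ta_r((c_k)_{k=1}^n, (σ_k), Φcall(Φ, ψ')); and (3) for all sequences of memory states (σ_k)_{k=1}^n, (σ'_k)_{k=1}^n and all procedure environments ψ', if P((σ_k)) and Tpr(Φ, ψ) then Tr((c_k)_{k=1}^n, (σ_k), (σ'_k), Φcall(Φ, ψ'), λp. p ⇒ Q((σ_k), (σ'_k))). Then the relational Hoare triple ψ ⊨ {P} (c_k)_{k=1}^n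 {Q} holds. -/
/-!
The conditions `Tfr` may use `Φ` only for an environment in which `Φ` already holds for all families
of calls, so they cannot be applied directly in `ψ`. Instead, `ψ` is approximated by the
environments `unroll ψ k`, in which calls nested deeper than `k` diverge. A call to `y` in
`unroll ψ (k + 1)` behaves exactly like the body `ψ y` run in `unroll ψ k`, so `Φ` is valid for
every `unroll ψ k` by induction on `k`. A finite family of terminating executions in `ψ` already
takes place in some `unroll ψ k`, hence `Φ` is valid for `ψ` itself.

Since `Tc` passes its conditions to an arbitrary continuation `f`, its soundness is phrased as: for
an actual execution, `f` holds of some true proposition.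
-/

section BigStep

variable {Y : Type} {ψ ψ' : Y → Com Y} {c c' : Com Y} {σ σ' : Mem}

theorem bigStep_call_iff {y : Y} : BigStep ψ (.call y) σ σ' ↔ BigStep ψ (ψ y) σ σ' :=
  ⟨fun | .call h => h, .call⟩

theorem BigStep.while_induction_s10 {b : Bexp} {I : Mem → Prop} {motive : Mem → Mem → Prop}
    (exit : ∀ σ, b.eval σ = false → motive σ σ)
    (step : ∀ σ σ'' σ', b.eval σ = true → BigStep ψ c σ σ'' → motive σ'' σ' → motive σ σ')
    (h : BigStep ψ (.while b I c) σ σ') : motive σ σ' := by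
  generalize hw : Com.while b I c = w at h
  induction h with
  | whileTrue hb hc _ _ ih => cases hw; exact step _ _ _ hb hc (ih rfl)
  | whileFalse hb => cases hw; exact exit _ hb
  | _ => cases hw

theorem BigStep.while_mono_s10 {b : Bexp} {I J : Mem → Prop} (h : BigStep ψ c ≤ BigStep ψ' c') :
    BigStep ψ (.while b I c) ≤ BigStep ψ' (.while b J c') :=
  fun _ _ => while_induction_s10 (fun _ => .whileFalse)
    fun _ _ _ hb hc ih => .whileTrue hb (h _ _ hc) ih

theorem BigSteps.mono (h : BigStep ψ ≤ BigStep ψ') : BigSteps ψ ≤ BigSteps ψ'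
  | _, _, _, .nil => .nil
  | _, _, _, .cons hc hcs => .cons (h _ _ _ hc) (mono h _ _ _ hcs)

theorem BigSteps.map_mono {α : Type*} {f g : α → Com Y}
    (h : ∀ a, BigStep ψ (f a) ≤ BigStep ψ' (g a)) :
    ∀ as : List α, BigSteps ψ (as.map f) ≤ BigSteps ψ' (as.map g)
  | [], _, _, .nil => .nil
  | a :: as, _, _, .cons hc hcs => .cons (h a _ _ hc) (map_mono h as _ _ hcs)

end BigStep

section Unroll

variable {Y : Type} {ψ ψ' s : Y → Com Y} {σ σ' : Mem}

/-- The command obtained from a command by substituting `s y` for every call to `y`. -/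
def Com.inlineCalls (s : Y → Com Y) : Com Y → Com Y
  | .skip => .skip
  | .assign i a => .assign i a
  | .store i a => .store i a
  | .assert P => .assert P
  | .seq c₀ c₁ => .seq (c₀.inlineCalls s) (c₁.inlineCalls s)
  | .cond b c₀ c₁ => .cond b (c₀.inlineCalls s) (c₁.inlineCalls s)
  | .while b I c => .while b I (c.inlineCalls s)
  | .call y => s y

theorem Com.inlineCalls_call (c : Com Y) : c.inlineCalls .call = c := by
  induction c <;> simp_all only [Com.inlineCalls]

theorem BigStep.inlineCalls (h : ∀ y, BigStep ψ (.call y) ≤ BigStep ψ' (s y)) {c : Com Y}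
    (hc : BigStep ψ c σ σ') : BigStep ψ' (c.inlineCalls s) σ σ' := by
  induction hc with
  | skip => exact .skip _
  | assign => exact .assign _ _ _
  | store => exact .store _ _ _
  | seq _ _ ih₁ ih₂ => exact .seq ih₁ ih₂
  | assert => exact .assert _ _
  | condTrue hb _ ih => exact .condTrue hb ih
  | condFalse hb _ ih => exact .condFalse hb ih
  | whileTrue hb _ _ ih₁ ih₂ => exact .whileTrue hb ih₁ ih₂
  | whileFalse hb => exact .whileFalse hb
  | call hbody _ => exact h _ _ _ (.call hbody)

theorem BigStep.of_inlineCalls (h : ∀ y, BigStep ψ' (s y) ≤ BigStep ψ (.call y)) :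
    ∀ c : Com Y, BigStep ψ' (c.inlineCalls s) ≤ BigStep ψ c
  | .skip, _, _, .skip _ => .skip _
  | .assign _ _, _, _, .assign _ _ _ => .assign _ _ _
  | .store _ _, _, _, .store _ _ _ => .store _ _ _
  | .assert _, _, _, .assert _ _ => .assert _ _
  | .seq c₀ c₁, _, _, .seq h₀ h₁ => .seq (of_inlineCalls h c₀ _ _ h₀) (of_inlineCalls h c₁ _ _ h₁)
  | .cond _ c₀ _, _, _, .condTrue hb h₀ => .condTrue hb (of_inlineCalls h c₀ _ _ h₀)
  | .cond _ _ c₁, _, _, .condFalse hb h₁ => .condFalse hb (of_inlineCalls h c₁ _ _ h₁)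
  | .while _ _ c, _, _, hw => while_mono_s10 (of_inlineCalls h c) _ _ hw
  | .call y, _, _, hc => h y _ _ hc

theorem bigStep_inlineCalls_iff (h : ∀ y σ σ', BigStep ψ' (s y) σ σ' ↔ BigStep ψ (.call y) σ σ')
    {c : Com Y} : BigStep ψ' (c.inlineCalls s) σ σ' ↔ BigStep ψ c σ σ' :=
  ⟨.of_inlineCalls (fun y σ σ' => (h y σ σ').1) c σ σ', .inlineCalls fun y σ σ' => (h y σ σ').2⟩

theorem BigStep.mono (h : ∀ y, BigStep ψ (.call y) ≤ BigStep ψ' (.call y)) :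
    BigStep ψ ≤ BigStep ψ' :=
  fun c _ _ hc => c.inlineCalls_call ▸ hc.inlineCalls h

/-- A command without terminating executions. -/
def Com.diverge : Com Y :=
  .while .tt (fun _ => True) .skip

theorem not_bigStep_diverge : ¬ BigStep ψ .diverge σ σ' :=
  BigStep.while_induction_s10 (motive := fun _ _ => False) (fun _ => Bool.noConfusion)
    fun _ _ _ _ _ => id

/-- The approximation of `ψ` up to call depth `k`: calls are inlined down to depth `k`, and deeper
ones are replaced by divergence. The resulting bodies contain no calls, so that their executions do
not depend on the environment they are run in. -/
def unroll (ψ : Y → Com Y) : ℕ → Y → Com Y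
  | 0 => fun _ => .diverge
  | k + 1 => fun y => (ψ y).inlineCalls (unroll ψ k)

theorem bigStep_unroll_iff_call (k : ℕ) (y : Y) (σ σ' : Mem) :
    BigStep ψ' (unroll ψ k y) σ σ' ↔ BigStep (unroll ψ k) (.call y) σ σ' := by
  rw [bigStep_call_iff]
  induction k generalizing ψ' y σ σ' with
  | zero => exact iff_of_false not_bigStep_diverge not_bigStep_diverge
  | succ k ih =>
    have iff_body {χ : Y → Com Y} :
        BigStep χ (unroll ψ (k + 1) y) σ σ' ↔ BigStep (unroll ψ k) (ψ y) σ σ' :=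
      bigStep_inlineCalls_iff fun y σ σ' => (ih y σ σ').trans bigStep_call_iff.symm
    exact iff_body.trans iff_body.symm

theorem bigStep_unroll_succ_call_iff {k : ℕ} {y : Y} :
    BigStep (unroll ψ (k + 1)) (.call y) σ σ' ↔ BigStep (unroll ψ k) (ψ y) σ σ' :=
  bigStep_call_iff.trans (bigStep_inlineCalls_iff (bigStep_unroll_iff_call k))

theorem not_bigStep_unroll_zero_call {y : Y} : ¬ BigStep (unroll ψ 0) (.call y) σ σ' :=
  fun h => not_bigStep_diverge (bigStep_call_iff.1 h)

theorem monotone_bigStep_unroll (ψ : Y → Com Y) : Monotone fun k => BigStep (unroll ψ k) := by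
  refine monotone_nat_of_le_succ fun k => ?_
  induction k with
  | zero => exact .mono fun _ _ _ h => (not_bigStep_unroll_zero_call h).elim
  | succ k ih =>
    exact .mono fun y σ σ' h =>
      bigStep_unroll_succ_call_iff.2 (ih _ _ _ (bigStep_unroll_succ_call_iff.1 h))

theorem BigStep.exists_unroll {c : Com Y} (h : BigStep ψ c σ σ') :
    ∃ k, BigStep (unroll ψ k) c σ σ' := by
  have mono := monotone_bigStep_unroll ψ
  induction h with
  | skip => exact ⟨0, .skip _⟩
  | assign => exact ⟨0, .assign _ _ _⟩
  | store => exact ⟨0, .store _ _ _⟩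
  | seq _ _ ih₁ ih₂ =>
    obtain ⟨k, hk⟩ := ih₁
    obtain ⟨m, hm⟩ := ih₂
    exact ⟨max k m, .seq (mono (le_max_left k m) _ _ _ hk) (mono (le_max_right k m) _ _ _ hm)⟩
  | assert => exact ⟨0, .assert _ _⟩
  | condTrue hb _ ih => exact ih.imp fun _ => .condTrue hb
  | condFalse hb _ ih => exact ih.imp fun _ => .condFalse hb
  | whileTrue hb _ _ ih₁ ih₂ =>
    obtain ⟨k, hk⟩ := ih₁
    obtain ⟨m, hm⟩ := ih₂
    exact ⟨max k m,
      .whileTrue hb (mono (le_max_left k m) _ _ _ hk) (mono (le_max_right k m) _ _ _ hm)⟩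
  | whileFalse hb => exact ⟨0, .whileFalse hb⟩
  | call _ ih => exact ih.elim fun k hk => ⟨k + 1, bigStep_unroll_succ_call_iff.2 hk⟩

theorem BigSteps.exists_unroll {cs : List (Com Y)} {σs σs' : List Mem}
    (h : BigSteps ψ cs σs σs') : ∃ k, BigSteps (unroll ψ k) cs σs σs' := by
  have mono := monotone_bigStep_unroll ψ
  induction h with
  | nil => exact ⟨0, .nil⟩
  | cons hc _ ih =>
    obtain ⟨k, hk⟩ := hc.exists_unroll
    obtain ⟨m, hm⟩ := ih
    exact ⟨max k m, .cons (mono (le_max_left k m) _ _ _ hk)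
      (.mono (mono (le_max_right k m)) _ _ _ hm)⟩

end Unroll

section Soundness

variable {Y : Type} {ψ χ : Y → Com Y} {φ : Y → Contract} {Φ : List Y → RContract}

theorem Tc.exists_apply : ∀ {c : Com Y} {σ σ' : Mem} {f : Prop → Prop},
    Tc c σ σ' φ f → ∃ p, f p
  | .skip, _, _, _, h | .assign _ _, _, _, _, h | .store _ _, _, _, _, h | .assert _, _, _, _, h
  | .while _ _ _, _, _, _, h | .call _, _, _, _, h => ⟨_, h⟩
  | .seq _ c₁, σ, _, _, h =>
    let ⟨_, h₁⟩ := exists_apply (h σ)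
    let ⟨_, hf⟩ := exists_apply (c := c₁) h₁
    ⟨_, hf⟩
  | .cond _ c₀ c₁, _, _, _, h =>
    let ⟨_, h₁⟩ := exists_apply (c := c₀) h
    let ⟨_, hf⟩ := exists_apply (c := c₁) h₁
    ⟨_, hf⟩

theorem BigStep.exists_true_of_tc (hφ : ContractValid ψ φ) {c : Com Y} {σ σ' : Mem}
    {f : Prop → Prop} (hc : BigStep ψ c σ σ') (ha : Ta c σ φ) (ht : Tc c σ σ' φ f) :
    ∃ p, p ∧ f p := by
  induction hc generalizing f with
  | skip | assign | store => exact ⟨_, rfl, ht⟩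
  | assert => exact ⟨_, ⟨ha, rfl⟩, ht⟩
  | @seq _ _ _ σ'' _ _ _ ih₀ ih₁ =>
    obtain ⟨ha₀, ha₁⟩ := ha
    obtain ⟨_, hq, haux⟩ := ih₀ ha₀ (ha₁ σ'')
    obtain ⟨_, hp₀, ht₁⟩ := ih₀ ha₀ (ht σ'')
    obtain ⟨_, hp₁, hf⟩ := ih₁ (haux hq) ht₁
    exact ⟨_, ⟨hp₀, hp₁⟩, hf⟩
  | @condTrue _ _ c₁ _ _ hb _ ih =>
    obtain ⟨_, hp, ht₁⟩ := ih (ha.1 hb) ht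
    -- `Tc` also traverses the branch not taken; its condition is guarded, hence need not be true.
    obtain ⟨_, hf⟩ := Tc.exists_apply (c := c₁) ht₁
    exact ⟨_, ⟨fun _ => hp, fun hb' => (nomatch hb.symm.trans hb')⟩, hf⟩
  | @condFalse _ c₀ _ _ _ hb _ ih =>
    obtain ⟨_, ht₁⟩ := Tc.exists_apply (c := c₀) ht
    obtain ⟨_, hp, hf⟩ := ih (ha.2 hb) ht₁
    exact ⟨_, ⟨fun hb' => (nomatch hb.symm.trans hb'), fun _ => hp⟩, hf⟩
  | @whileTrue b I _ σ σ'' σ' hb _ _ ihc ihw =>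
    obtain ⟨hI, haux, hinv⟩ := ha
    obtain ⟨_, hp, hI''⟩ := ihc (haux σ hI hb) (hinv σ σ'' hI)
    -- `ht` starts at `σ`, not `σ''`, so the remaining iterations get a continuation of their own.
    obtain ⟨_, hq, hexit⟩ : ∃ q, q ∧ (q → I σ' ∧ b.eval σ' = false) :=
      ihw ⟨hI'' hp, haux, hinv⟩ And.right
    exact ⟨_, ⟨hI, hexit hq⟩, ht⟩
  | whileFalse hb => exact ⟨_, ⟨ha.1, ha.1, hb⟩, ht⟩
  | call hbody _ => exact ⟨_, ⟨ha, hφ _ _ _ ha (.call hbody)⟩, ht⟩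

theorem BigSteps.exists_true_of_tr (hφ : ContractValid ψ φ) {cs : List (Com Y)}
    {σs σs' : List Mem} {f : Prop → Prop} (hcs : BigSteps ψ cs σs σs') (ha : Tar cs σs φ)
    (ht : Tr cs σs σs' φ f) : ∃ p, p ∧ f p := by
  induction hcs generalizing f with
  | nil => exact ⟨_, trivial, ht⟩
  | cons hc _ ih =>
    obtain ⟨_, hp, ht'⟩ := hc.exists_true_of_tc hφ ha.1 ht
    obtain ⟨_, hq, hf⟩ := ih ha.2 ht'
    exact ⟨_, ⟨hp, hq⟩, hf⟩

theorem ContractValid.rHoare (hφ : ContractValid ψ φ) {cs : List (Com Y)} {P : List Mem → Prop}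
    {Q : List Mem → List Mem → Prop} (ha : ∀ σs, P σs → Tar cs σs φ)
    (ht : ∀ σs σs', P σs → Tr cs σs σs' φ fun p => p → Q σs σs') : RHoare ψ P cs Q := by
  intro σs σs' hP hcs
  obtain ⟨_, hp, hQ⟩ := hcs.exists_true_of_tr hφ (ha σs hP) (ht σs σs' hP)
  exact hQ hp

theorem procpred_iff_bigSteps : ∀ {ys : List Y} {σs σs' : List Mem},
    Procpred ψ ys σs σs' ↔ BigSteps ψ (ys.map .call) σs σs'
  | [], [], [] => iff_of_true trivial .nil
  | _ :: _, _ :: _, _ :: _ =>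
    ⟨fun ⟨h, hs⟩ => .cons h (procpred_iff_bigSteps.1 hs),
      fun | .cons h hs => ⟨h, procpred_iff_bigSteps.2 hs⟩⟩
  | [], [], _ :: _ | [], _ :: _, _ | _ :: _, [], _ | _ :: _, _ :: _, [] =>
    iff_of_false id nofun

theorem tpr_iff_rContractValid : Tpr Φ ψ ↔ RContractValid ψ Φ :=
  ⟨fun h ys hne σs σs' hpre hcs => h ys σs σs' hne (procpred_iff_bigSteps.2 hcs) hpre,
    fun h ys σs σs' hne hcs hpre => h ys hne σs σs' hpre (procpred_iff_bigSteps.1 hcs)⟩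

theorem RContractValid.contractValid_phicall (h : RContractValid ψ Φ) :
    ContractValid ψ (Phicall Φ ψ) :=
  fun y _ _ hpre hc => ⟨h [y] (List.cons_ne_nil _ _) _ _ hpre (.cons hc .nil), hc⟩

theorem Tfr.rHoare_bodies (h : Tfr Φ ψ) (hχ : RContractValid χ Φ) (ys : List Y) :
    RHoare χ (Φ ys).1 (ys.map ψ) (Φ ys).2 :=
  have hT : Tpr Φ χ := tpr_iff_rContractValid.2 hχ
  hχ.contractValid_phicall.rHoare (fun σs hpre => (h ys σs σs χ hpre hT).1)
    fun σs σs' hpre => (h ys σs σs' χ hpre hT).2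

theorem Tfr.rContractValid_unroll (h : Tfr Φ ψ) : ∀ k, RContractValid (unroll ψ k) Φ
  | 0, [], hne, _, _, _, _ => (hne rfl).elim
  | 0, _ :: _, _, _, _, _, .cons hc _ => (not_bigStep_unroll_zero_call hc).elim
  | k + 1, ys, _, σs, σs', hpre, hcs =>
    have hbodies : BigSteps (unroll ψ k) (ys.map ψ) σs σs' :=
      .map_mono (fun _ _ _ => bigStep_unroll_succ_call_iff.1) ys _ _ hcs
    h.rHoare_bodies (h.rContractValid_unroll k) ys σs σs' hpre hbodies

theorem Tfr.rContractValid (h : Tfr Φ ψ) : RContractValid ψ Φ := by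
  intro ys hne σs σs' hpre hcs
  obtain ⟨k, hk⟩ := hcs.exists_unroll
  exact h.rContractValid_unroll k ys hne σs σs' hpre hk

end Soundness

theorem relational_vcgen_sound_general {Y : Type} (ψ : Y → Com Y)
    (Φ : List Y → RContract) (cs : List (Com Y))
    (P : List Mem → Prop) (Q : List Mem → List Mem → Prop)
    (hTf : Tfr Φ ψ)
    (hTa : ∀ σs : List Mem, P σs → Tpr Φ ψ → Tar cs σs (Phicall Φ ψ))
    (hTr : ∀ σs σs' : List Mem, P σs → Tpr Φ ψ →
      Tr cs σs σs' (Phicall Φ ψ) (fun p => p → Q σs σs')) :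
    RHoare ψ P cs Q :=
  have hΦ : RContractValid ψ Φ := hTf.rContractValid
  have hT : Tpr Φ ψ := tpr_iff_rContractValid.2 hΦ
  hΦ.contractValid_phicall.rHoare (fun σs hP => hTa σs hP hT) fun σs σs' hP => hTr σs σs' hP hT

/-- Theorem 4: soundness of the relational VCGen. -/
theorem relational_vcgen_sound {Y : Type} (ψ : Y → Com Y)
    (Φ : List Y → RContract) (cs : List (Com Y))
    (P : List Mem → Prop) (Q : List Mem → List Mem → Prop)
    (h1 : Tfr Φ ψ)
    (h2 : ∀ (σs : List Mem) (ψ' : Y → Com Y), P σs → Tpr Φ ψ →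
      Tar cs σs (Phicall Φ ψ'))
    (h3 : ∀ (σs σs' : List Mem) (ψ' : Y → Com Y), P σs → Tpr Φ ψ →
      Tr cs σs σs' (Phicall Φ ψ') (fun p => p → Q σs σs')) :
    RHoare ψ P cs Q :=
  relational_vcgen_sound_general ψ Φ cs P Q h1 (fun σs => h2 σs ψ) fun σs σs' => h3 σs σs' ψ
end

section
/- (Relational property R3 of the summation procedure.) The relational Hoare triple ψ_sum ⊨ {P} (c_sum, c_sum) {Q} holds, where P(σ₁, σ₂) := σ₂(1) < σ₂(2) ∧ σ₁(2) = σ₂(2) ∧ σ₁(1) = σ₂(1) + 1 ∧ σ₁(3) = σ₂(3) + σ₂(1), and Q(σ₁, σ₂, σ'₁, σ'₂) := σ'₁(3) = σ'₂(3). That is, if ⟨c_sum, σ₁⟩ →_{ψ_sum} σ'₁ and ⟨c_sum, σ₂⟩ →_{ψ_sum} σ'₂ and P(σ₁, σ₂) holds, then σ'₁(3) = σ'₂(3). -/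
/-! Running `csum` adds the elements of the interval `[x_1, x_2)` to `x_3`. On these locations, the
first initial state of R3 is the second one with the least element of the interval already moved
into `x_3`, so both runs end with the same total. -/

theorem Mem.update_apply (σ : Mem) (i n j : ℕ) : σ.update i n j = if j = i then n else σ j :=
  rfl

namespace BigStep

variable {Y : Type} {ψ : Y → Com Y} {σ σ' : Mem}

theorem skip_iff : BigStep ψ .skip σ σ' ↔ σ' = σ := by
  constructor
  · rintro ⟨⟩
    rfl
  · rintro rfl
    exact .skip _

theorem assign_iff {i : ℕ} {a : Aexp} :
    BigStep ψ (.assign i a) σ σ' ↔ σ' = σ.update i (a.eval σ) := by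
  constructor
  · rintro ⟨⟩
    rfl
  · rintro rfl
    exact .assign i a σ

theorem seq_iff {c₁ c₂ : Com Y} :
    BigStep ψ (.seq c₁ c₂) σ σ' ↔ ∃ τ, BigStep ψ c₁ σ τ ∧ BigStep ψ c₂ τ σ' := by
  constructor
  · intro h
    cases h with
    | seq h₁ h₂ => exact ⟨_, h₁, h₂⟩
  · rintro ⟨τ, h₁, h₂⟩
    exact .seq h₁ h₂

theorem cond_iff_of_true {b : Bexp} {c₁ c₂ : Com Y} (hb : b.eval σ = true) :
    BigStep ψ (.cond b c₁ c₂) σ σ' ↔ BigStep ψ c₁ σ σ' := by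
  refine ⟨fun h ↦ ?_, .condTrue hb⟩
  cases h with
  | condTrue _ h₁ => exact h₁
  | condFalse hb' _ => simp [hb] at hb'

theorem cond_iff_of_false {b : Bexp} {c₁ c₂ : Com Y} (hb : b.eval σ = false) :
    BigStep ψ (.cond b c₁ c₂) σ σ' ↔ BigStep ψ c₂ σ σ' := by
  refine ⟨fun h ↦ ?_, .condFalse hb⟩
  cases h with
  | condTrue hb' _ => simp [hb] at hb'
  | condFalse _ h₂ => exact h₂

theorem call_iff {y : Y} : BigStep ψ (.call y) σ σ' ↔ BigStep ψ (ψ y) σ σ' := by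
  refine ⟨fun h ↦ ?_, .call⟩
  cases h with
  | call h => exact h

end BigStep

/-- The memory state in which `csum`, started in `σ` with `σ 1 < σ 2`, calls itself. -/
def csumStep (σ : Mem) : Mem :=
  (σ.update 3 (σ 3 + σ 1)).update 1 (σ 1 + 1)

section CsumStep

variable {σ σ' : Mem}

theorem csumStep_one : csumStep σ 1 = σ 1 + 1 := by
  simp [csumStep, Mem.update_apply]

theorem csumStep_two : csumStep σ 2 = σ 2 := by
  simp [csumStep, Mem.update_apply]

theorem csumStep_three : csumStep σ 3 = σ 3 + σ 1 := by
  simp [csumStep, Mem.update_apply]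

theorem bigStep_csum_iff_of_lt (h : σ 1 < σ 2) :
    BigStep psum csum σ σ' ↔ BigStep psum csum (csumStep σ) σ' := by
  have guard_true : (Bexp.cmp .lt (.loc 1) (.loc 2)).eval σ = true := decide_eq_true h
  conv_lhs => rw [csum, BigStep.cond_iff_of_true guard_true]
  simp [BigStep.seq_iff, BigStep.assign_iff, BigStep.call_iff, psum, csumStep, Aexp.eval, Aop.eval,
    Mem.update_apply]

theorem bigStep_csum_iff_of_le (h : σ 2 ≤ σ 1) : BigStep psum csum σ σ' ↔ σ' = σ := by
  have guard_false : (Bexp.cmp .lt (.loc 1) (.loc 2)).eval σ = false := decide_eq_false h.not_gt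
  rw [csum, BigStep.cond_iff_of_false guard_false, BigStep.skip_iff]

end CsumStep

theorem csum_apply_three_eq_add_sum_Ico {σ σ' : Mem} (h : BigStep psum csum σ σ') :
    σ' 3 = σ 3 + ∑ i ∈ Finset.Ico (σ 1) (σ 2), i := by
  rcases lt_or_ge (σ 1) (σ 2) with hlt | hle
  · have hcall : BigStep psum csum (csumStep σ) σ' := (bigStep_csum_iff_of_lt hlt).1 h
    rw [csum_apply_three_eq_add_sum_Ico hcall, csumStep_one, csumStep_two, csumStep_three,
      add_assoc, Finset.sum_eq_sum_Ico_succ_bot hlt]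
  · rw [(bigStep_csum_iff_of_le hle).1 h, Finset.Ico_eq_empty_of_le hle, Finset.sum_empty, add_zero]
termination_by σ 2 - σ 1
decreasing_by
  rw [csumStep_one, csumStep_two]
  omega

/-- Relational property R3 of the summation procedure. -/
theorem csum_R3 (σ1 σ2 σ1' σ2' : Mem)
    (h1 : BigStep psum csum σ1 σ1')
    (h2 : BigStep psum csum σ2 σ2')
    (hP : σ2 1 < σ2 2 ∧ σ1 2 = σ2 2 ∧ σ1 1 = σ2 1 + 1 ∧
          σ1 3 = σ2 3 + σ2 1) :
    σ1' 3 = σ2' 3 := by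
  obtain ⟨hlt, hx2, hx1, hx3⟩ := hP
  calc
    σ1' 3 = σ1 3 + ∑ i ∈ Finset.Ico (σ1 1) (σ1 2), i := csum_apply_three_eq_add_sum_Ico h1
    _ = σ2 3 + (σ2 1 + ∑ i ∈ Finset.Ico (σ2 1 + 1) (σ2 2), i) := by rw [hx1, hx2, hx3, add_assoc]
    _ = σ2 3 + ∑ i ∈ Finset.Ico (σ2 1) (σ2 2), i := by rw [Finset.sum_eq_sum_Ico_succ_bot hlt]
    _ = σ2' 3 := (csum_apply_three_eq_add_sum_Ico h2).symm
end
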